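/- Let b ≥ 2 be an integer base. If n is a positive integer with at least two base-b digits (i.e., n ≥ b) and d ∈ {0,…,b−1} is a digit with d = n mod b, then r(b, b·n + d) = b·r(b, n) + d. -/

import Mathlib

/-- The "raboter" operation: shorten each maximal run of consecutive equal base-`b`
digits of `n` by one.  In most-significant-first order a digit is kept exactly when it
equals the digit immediately following it; working with `Nat.digits b n`
(least-significant-first), a digit is kept iff it equals the next less-significant
digit.  If all digits are deleted the result is `0`. -/
def raboter (b n : ℕ) : ℕ :=
  Nat.ofDigits b (((Nat.digits b n).tail.zip (Nat.digits b n)).filterMap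
    (fun p => if p.1 = p.2 then some p.1 else none))

/-- Appending the digit `d = n mod b` to `n` (with `n ≥ b`) appends `d` to the
raboter value: `r(b, b·n + d) = b·r(b,n) + d`. -/
theorem raboter_append_eq (b n d : ℕ) (hb : 2 ≤ b) (hn : b ≤ n) (hd : d < b)
    (heq : d = n % b) : raboter b (b * n + d) = b * raboter b n + d := by
  have hpos : 0 < n := by omega
  have h1 : Nat.digits b n = d :: Nat.digits b (n / b) := by
    rw [heq]
    exact Nat.digits_def' (by omega) hpos
  have h2 : Nat.digits b (b * n + d) = d :: Nat.digits b n := by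
    rw [add_comm]
    exact Nat.digits_add b (by omega) d n hd (Or.inr hpos.ne')
  -- The new least significant digit `d` meets the old one, also `d`, so the pair is kept;
  -- the remaining adjacent pairs are those of `n`.
  unfold raboter
  rw [h2, h1]
  simp [Nat.ofDigits_cons, add_comm]
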